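/- For every γ > 0 there exists a constant M̄ = M̄(γ) > 0 such that for every D > 0, S > 0, every k ∈ ℤ²_*, and every ω : ℤ²_* → ℂ with |ω|_{∞,γ} ≤ D and ‖ω‖ ≤ S, the partial sum Σ₃ = ∑_{ℓ₂ ∈ ℤ²_*, |ℓ₂| > 2|k|, k−ℓ₂ ∈ ℤ²_*} |ω_{k−ℓ₂}| · |ω_{ℓ₂}| · (|k|/|ℓ₂|) satisfies Σ₃ ≤ M̄ · D · S · |k| / |k|^γ. -/

import Mathlib

/-!
On the range `|ℓ| > 2|k|` the triangle inequality gives `|k - ℓ| ≥ |ℓ| / 2`, so the weighted sup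
bound yields `|ω_{k-ℓ}| ≤ 2^γ D |ℓ|^{-γ}` and the sum is at most
`2^γ D |k| ∑ |ω_ℓ| |ℓ|^{-(1+γ)}`.  Cauchy–Schwarz (`sqrt_tail_bound`) bounds the remaining sum by
`S` times the square root of `∑_{|ℓ| > 2|k|} |ℓ|^{-(2+2γ)}`.

This tail is `O(|k|^{-2γ})` (`lattice_tail`): the sphere of radius `n` for the sup norm on `ℤ²`
has `8n` points, which reduces it to `∑_{n ≥ |k|} n^{-(1+2γ)}`, and that sum is dominated by a
telescoping one since `n^{-(1+s)} ≤ (2^(1+s)/s) (n^{-s} - (n+1)^{-s})` (`rpow_step`).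

Everything is proved for finite partial sums with uniform constants, which gives summability and
the bound on the infinite sum at once.
-/

open scoped Classical

/-- `ℤ²_* = ℤ² ∖ {0}`. -/
abbrev Zstar : Type := {k : ℤ × ℤ // k ≠ 0}

/-- Euclidean norm of a lattice point. -/
noncomputable def znorm (a : ℤ × ℤ) : ℝ := Real.sqrt ((a.1 : ℝ) ^ 2 + (a.2 : ℝ) ^ 2)

/-- Extension of a function on `ℤ²_*` to `ℤ²` by zero. -/
noncomputable def zext (ω : Zstar → ℂ) : ℤ × ℤ → ℂ :=
  fun k => if h : k ≠ 0 then ω ⟨k, h⟩ else 0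


lemma znorm_eq (a : ℤ × ℤ) : znorm a = ‖((a.1 : ℝ) + (a.2 : ℝ) * Complex.I : ℂ)‖ := by
  rw [Complex.norm_add_mul_I, znorm]

lemma znorm_le_add (a b : ℤ × ℤ) : znorm b ≤ znorm (a - b) + znorm a := by
  simp only [znorm_eq]
  refine le_trans (le_of_eq ?_) ((norm_sub_le _ _).trans_eq (add_comm _ _))
  congr 1
  push_cast [Prod.fst_sub, Prod.snd_sub]
  ring

/-- The sup norm of a lattice point, as a natural number. -/
def supAbs (a : ℤ × ℤ) : ℕ := max a.1.natAbs a.2.natAbs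

lemma supAbs_le_znorm (a : ℤ × ℤ) : (supAbs a : ℝ) ≤ znorm a := by
  unfold supAbs znorm
  apply Real.le_sqrt_of_sq_le
  rcases max_choice a.1.natAbs a.2.natAbs with h | h <;> rw [h] <;>
    rw [Nat.cast_natAbs, Int.cast_abs, sq_abs] <;>
    nlinarith [sq_nonneg (a.1 : ℝ), sq_nonneg (a.2 : ℝ)]

lemma znorm_le_two_mul_supAbs (a : ℤ × ℤ) : znorm a ≤ 2 * supAbs a := by
  unfold supAbs znorm
  apply Real.sqrt_le_iff.2 ⟨by positivity, ?_⟩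
  have h1 : |(a.1 : ℝ)| ≤ (max a.1.natAbs a.2.natAbs : ℕ) := by
    rw [← Int.cast_abs, ← Nat.cast_natAbs]; exact_mod_cast le_max_left _ _
  have h2 : |(a.2 : ℝ)| ≤ (max a.1.natAbs a.2.natAbs : ℕ) := by
    rw [← Int.cast_abs, ← Nat.cast_natAbs]; exact_mod_cast le_max_right _ _
  have h3 := sq_le_sq' (by linarith [abs_nonneg (a.1 : ℝ)]) h1
  have h4 := sq_le_sq' (by linarith [abs_nonneg (a.2 : ℝ)]) h2
  rw [sq_abs] at h3 h4
  nlinarith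

lemma one_le_znorm {a : ℤ × ℤ} (ha : a ≠ 0) : 1 ≤ znorm a := by
  refine le_trans ?_ (supAbs_le_znorm a)
  have : 1 ≤ supAbs a := by
    by_contra! h
    apply ha
    unfold supAbs at h
    ext <;> simp <;> omega
  exact_mod_cast this

/-- Discrete comparison of `n^{-(1+s)}` with the increments of `n^{-s}`. -/
lemma rpow_step {s : ℝ} (hs : 0 < s) {n : ℕ} (hn : 1 ≤ n) :
    (n : ℝ) ^ (-(1 + s)) ≤ 2 ^ (1 + s) / s * ((n : ℝ) ^ (-s) - ((n + 1 : ℕ) : ℝ) ^ (-s)) := by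
  have hx : (1 : ℝ) ≤ n := by exact_mod_cast hn
  push_cast
  set x : ℝ := (n : ℝ)
  have hx0 : 0 < x := by linarith
  have hy0 : 0 < x + 1 := by linarith
  -- `((x+1)/x)^s = exp (s log ((x+1)/x)) ≥ 1 + s (1 - x/(x+1))`
  have h1 : 1 + s / (x + 1) ≤ ((x + 1) / x) ^ s := by
    rw [Real.rpow_def_of_pos (by positivity)]
    have hl := Real.one_sub_inv_le_log_of_pos (x := (x + 1) / x) (by positivity)
    have he : 1 - ((x + 1) / x)⁻¹ = 1 / (x + 1) := by field_simp; ring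
    rw [he] at hl
    have := Real.add_one_le_exp (Real.log ((x + 1) / x) * s)
    have h2 := mul_le_mul_of_nonneg_right hl hs.le
    have h3 : 1 / (x + 1) * s = s / (x + 1) := by ring
    linarith
  have h2 : x ^ (-s) = (x + 1) ^ (-s) * ((x + 1) / x) ^ s := by
    rw [Real.div_rpow hy0.le hx0.le, Real.rpow_neg hx0.le, Real.rpow_neg hy0.le]
    have := (Real.rpow_pos_of_pos hy0 s).ne'
    field_simp
  have h3 : s * (x + 1) ^ (-(1 + s)) ≤ x ^ (-s) - (x + 1) ^ (-s) := by
    have e : (x + 1) ^ (-(1 + s)) = (x + 1) ^ (-s) * (1 / (x + 1)) := by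
      rw [show -(1 + s) = -s + -1 by ring, Real.rpow_add hy0, Real.rpow_neg_one, one_div]
    have := mul_le_mul_of_nonneg_left h1 (Real.rpow_nonneg hy0.le (-s))
    rw [h2, e]
    have e2 : (x + 1) ^ (-s) * (1 + s / (x + 1))
      = (x + 1) ^ (-s) + s * ((x + 1) ^ (-s) * (1 / (x + 1))) := by ring
    linarith
  have h4 : x ^ (-(1 + s)) ≤ 2 ^ (1 + s) * (x + 1) ^ (-(1 + s)) := by
    have : (2 * x) ^ (-(1 + s)) ≤ (x + 1) ^ (-(1 + s)) :=
      Real.rpow_le_rpow_of_nonpos hy0 (by linarith) (by linarith)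
    rw [Real.mul_rpow (by norm_num) hx0.le, Real.rpow_neg (by norm_num : (0 : ℝ) ≤ 2)] at this
    have hp : (0 : ℝ) < 2 ^ (1 + s) := by positivity
    calc x ^ (-(1 + s)) = 2 ^ (1 + s) * ((2 ^ (1 + s))⁻¹ * x ^ (-(1 + s))) := by field_simp
      _ ≤ _ := by gcongr
  calc _ ≤ _ := h4
    _ = 2 ^ (1 + s) / s * (s * (x + 1) ^ (-(1 + s))) := by field_simp
    _ ≤ _ := by gcongr

lemma nat_tail {s : ℝ} (hs : 0 < s) {m : ℕ} (hm : 1 ≤ m) (N : ℕ) :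
    ∑ n ∈ Finset.Ico m N, (n : ℝ) ^ (-(1 + s)) ≤ 2 ^ (1 + s) / s * (m : ℝ) ^ (-s) := by
  have hC : 0 ≤ 2 ^ (1 + s) / s := by positivity
  rcases le_total N m with h | h
  · rw [Finset.Ico_eq_empty_of_le h, Finset.sum_empty]; positivity
  calc _ ≤ ∑ n ∈ Finset.Ico m N,
        2 ^ (1 + s) / s * ((n : ℝ) ^ (-s) - ((n + 1 : ℕ) : ℝ) ^ (-s)) :=
        Finset.sum_le_sum fun n hn => rpow_step hs (hm.trans (Finset.mem_Ico.1 hn).1)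
    _ = 2 ^ (1 + s) / s * ((m : ℝ) ^ (-s) - (N : ℝ) ^ (-s)) := by
        rw [← Finset.mul_sum]
        congr 1
        have := Finset.sum_Ico_sub (fun n : ℕ => -((n : ℝ) ^ (-s))) h
        rw [show (m : ℝ) ^ (-s) - (N : ℝ) ^ (-s) = -(N : ℝ) ^ (-s) - -(m : ℝ) ^ (-s) by ring,
          ← this]
        exact Finset.sum_congr rfl fun n _ => by ring
    _ ≤ _ := by
        gcongr
        have : 0 ≤ (N : ℝ) ^ (-s) := by positivity
        linarith

/-- Decay of the tails of the lattice sum `∑ |ℓ|^{-(2+s)}` over `ℤ²`, in finite form. -/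
lemma lattice_tail {s : ℝ} (hs : 0 < s) {R : ℝ} (hR : 1 ≤ R) (F : Finset (ℤ × ℤ))
    (hF : ∀ a ∈ F, 2 * R < znorm a) :
    ∑ a ∈ F, znorm a ^ (-(2 + s)) ≤ 8 * (2 ^ (1 + s) / s) * R ^ (-s) := by
  have hm : 1 ≤ ⌈R⌉₊ := Nat.one_le_ceil_iff.2 (by linarith)
  have hsup : ∀ a ∈ F, R < supAbs a := fun a ha => by
    linarith [hF a ha, znorm_le_two_mul_supAbs a]
  have hmaps : ∀ a ∈ F, supAbs a ∈ Finset.Ico ⌈R⌉₊ (F.sup supAbs + 1) := fun a ha =>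
    Finset.mem_Ico.2 ⟨Nat.ceil_le.2 (hsup a ha).le, Nat.lt_succ_of_le (Finset.le_sup ha)⟩
  calc ∑ a ∈ F, znorm a ^ (-(2 + s))
      ≤ ∑ a ∈ F, (supAbs a : ℝ) ^ (-(2 + s)) := Finset.sum_le_sum fun a ha =>
        Real.rpow_le_rpow_of_nonpos (by linarith [hsup a ha]) (supAbs_le_znorm a) (by linarith)
    _ = ∑ n ∈ Finset.Ico ⌈R⌉₊ (F.sup supAbs + 1),
          ∑ a ∈ F with supAbs a = n, (supAbs a : ℝ) ^ (-(2 + s)) :=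
        (Finset.sum_fiberwise_of_maps_to hmaps _).symm
    _ ≤ ∑ n ∈ Finset.Ico ⌈R⌉₊ (F.sup supAbs + 1), 8 * (n : ℝ) ^ (-(1 + s)) := by
        refine Finset.sum_le_sum fun n hn => ?_
        have hn1 : 1 ≤ n := hm.trans (Finset.mem_Ico.1 hn).1
        have hn0 : (0 : ℝ) < n := by exact_mod_cast hn1
        have hcard : (F.filter fun a => supAbs a = n).card ≤ 8 * n := by
          rw [← Int.card_box (by omega : n ≠ 0)]
          refine Finset.card_le_card fun a ha => ?_
          rw [Int.mem_box]
          exact (Finset.mem_filter.1 ha).2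
        calc _ = ∑ a ∈ F with supAbs a = n, (n : ℝ) ^ (-(2 + s)) :=
              Finset.sum_congr rfl fun a ha => by rw [(Finset.mem_filter.1 ha).2]
          _ = ((F.filter fun a => supAbs a = n).card : ℝ) * (n : ℝ) ^ (-(2 + s)) := by
              rw [Finset.sum_const, nsmul_eq_mul]
          _ ≤ (8 * n : ℝ) * (n : ℝ) ^ (-(2 + s)) := by
              gcongr
              exact_mod_cast hcard
          _ = 8 * (n : ℝ) ^ (-(1 + s)) := by
              rw [show -(1 + s) = 1 + -(2 + s) by ring, Real.rpow_add hn0, Real.rpow_one]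
              ring
    _ ≤ 8 * (2 ^ (1 + s) / s * (⌈R⌉₊ : ℝ) ^ (-s)) := by
        rw [← Finset.mul_sum]
        gcongr
        exact nat_tail hs hm _
    _ ≤ _ := by
        rw [mul_assoc]
        gcongr 8 * (_ * ?_)
        exact Real.rpow_le_rpow_of_nonpos (by linarith) (Nat.le_ceil R) (by linarith)

lemma sum_zext_sq_le {ω : Zstar → ℂ} {B : ℝ} (hsum : Summable fun j : Zstar => ‖ω j‖ ^ 2)
    (hB : (∑' j : Zstar, ‖ω j‖ ^ 2) ≤ B) (F : Finset (ℤ × ℤ)) (hF : ∀ a ∈ F, a ≠ 0) :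
    ∑ a ∈ F, ‖zext ω a‖ ^ 2 ≤ B := by
  rw [← Finset.sum_subtype_of_mem _ hF]
  refine le_trans (le_of_eq ?_) ((hsum.sum_le_tsum (F.subtype fun a => a ≠ 0)
    fun j _ => by positivity).trans hB)
  exact Finset.sum_congr rfl fun j _ => by simp [zext, j.2]

/-- Cauchy–Schwarz between an `ℓ²` function and the lattice weight on `|ℓ| > 2R`. -/
lemma sqrt_tail_bound {γ : ℝ} (hγ : 0 < γ) {S : ℝ} (hS : 0 < S) {ω : Zstar → ℂ}
    (hsum : Summable fun j : Zstar => ‖ω j‖ ^ 2) (hω : (∑' j : Zstar, ‖ω j‖ ^ 2) ≤ S ^ 2)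
    {R : ℝ} (hR : 1 ≤ R) (F : Finset (ℤ × ℤ)) (hF0 : ∀ a ∈ F, a ≠ 0)
    (hF : ∀ a ∈ F, 2 * R < znorm a) :
    ∑ a ∈ F, ‖zext ω a‖ * znorm a ^ (-(1 + γ)) ≤
      S * (√(8 * (2 ^ (1 + 2 * γ) / (2 * γ))) * R ^ (-γ)) := by
  refine (Real.sum_mul_le_sqrt_mul_sqrt F _ _).trans ?_
  refine mul_le_mul ?_ ?_ (Real.sqrt_nonneg _) hS.le
  · exact Real.sqrt_le_iff.2 ⟨hS.le, sum_zext_sq_le hsum hω F hF0⟩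
  · have h := lattice_tail (s := 2 * γ) (by linarith) hR F hF
    have hR0 : 0 < R := by linarith
    have e : R ^ (-(2 * γ)) = (R ^ (-γ)) ^ 2 := by
      rw [← Real.rpow_mul_natCast hR0.le]; congr 1; push_cast; ring
    rw [e] at h
    rw [← Real.sqrt_sq (Real.rpow_nonneg hR0.le (-γ)), ← Real.sqrt_mul (by positivity)]
    refine Real.sqrt_le_sqrt (le_trans (le_of_eq ?_) h)
    refine Finset.sum_congr rfl fun a ha => ?_
    rw [← Real.rpow_mul_natCast (show 0 ≤ znorm a from Real.sqrt_nonneg _)]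
    congr 1; push_cast; ring

/-- for every `γ > 0` there is `M̄ = M̄(γ) > 0` bounding the tail partial
sum `Σ₃` over `|ℓ₂| > 2|k|`; the sum converges. -/
theorem stmt3 :
    ∀ γ : ℝ, 0 < γ → ∃ Mbar : ℝ, 0 < Mbar ∧
      ∀ (D S : ℝ), 0 < D → 0 < S →
      ∀ k : Zstar,
      ∀ ω : Zstar → ℂ,
        (∀ j : Zstar, znorm j.1 ^ γ * ‖ω j‖ ≤ D) →
        (Summable fun j : Zstar => ‖ω j‖ ^ 2) →
        (∑' j : Zstar, ‖ω j‖ ^ 2) ≤ S ^ 2 →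
        (Summable fun ℓ : ℤ × ℤ =>
            if ℓ ≠ 0 ∧ 2 * znorm k.1 < znorm ℓ ∧ k.1 - ℓ ≠ 0 then
              ‖zext ω (k.1 - ℓ)‖ * ‖zext ω ℓ‖ * (znorm k.1 / znorm ℓ)
            else 0) ∧
        (∑' ℓ : ℤ × ℤ,
            if ℓ ≠ 0 ∧ 2 * znorm k.1 < znorm ℓ ∧ k.1 - ℓ ≠ 0 then
              ‖zext ω (k.1 - ℓ)‖ * ‖zext ω ℓ‖ * (znorm k.1 / znorm ℓ)
            else 0)
          ≤ Mbar * D * S * znorm k.1 / znorm k.1 ^ γ := by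
  intro γ hγ
  refine ⟨2 ^ γ * √(8 * (2 ^ (1 + 2 * γ) / (2 * γ))), by positivity, ?_⟩
  intro D S hD hS k ω hsup hsum hω
  have hk1 : 1 ≤ znorm k.1 := one_le_znorm k.2
  have hk0 : 0 < znorm k.1 := by linarith
  -- Pointwise bound of the summand, using `|k - ℓ| ≥ |ℓ| / 2`.
  have hpt : ∀ ℓ : ℤ × ℤ, (ℓ ≠ 0 ∧ 2 * znorm k.1 < znorm ℓ ∧ k.1 - ℓ ≠ 0) →
      ‖zext ω (k.1 - ℓ)‖ * ‖zext ω ℓ‖ * (znorm k.1 / znorm ℓ) ≤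
        2 ^ γ * D * znorm k.1 * (‖zext ω ℓ‖ * znorm ℓ ^ (-(1 + γ))) := by
    rintro ℓ ⟨-, hl, hkl⟩
    have hl0 : 0 < znorm ℓ := by linarith
    have hhalf : znorm ℓ / 2 ≤ znorm (k.1 - ℓ) := by linarith [znorm_le_add k.1 ℓ]
    have hz : ‖zext ω (k.1 - ℓ)‖ ≤ 2 ^ γ * D * znorm ℓ ^ (-γ) := by
      have h1 := hsup ⟨k.1 - ℓ, hkl⟩
      have h2 : zext ω (k.1 - ℓ) = ω ⟨k.1 - ℓ, hkl⟩ := dif_pos hkl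
      rw [← h2] at h1
      have h3 : (znorm ℓ / 2) ^ γ * ‖zext ω (k.1 - ℓ)‖ ≤ D :=
        le_trans (by gcongr) h1
      rw [Real.div_rpow hl0.le (by norm_num)] at h3
      rw [Real.rpow_neg hl0.le, ← div_eq_mul_inv, le_div_iff₀ (by positivity)]
      have h4 : (0 : ℝ) < 2 ^ γ := by positivity
      calc _ = 2 ^ γ * (znorm ℓ ^ γ / 2 ^ γ * ‖zext ω (k.1 - ℓ)‖) := by field_simp
        _ ≤ _ := by gcongr
    have e : znorm ℓ ^ (-(1 + γ)) = znorm ℓ ^ (-γ) * (znorm ℓ)⁻¹ := by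
      rw [show -(1 + γ) = -γ + -1 by ring, Real.rpow_add hl0, Real.rpow_neg_one]
    calc _ ≤ 2 ^ γ * D * znorm ℓ ^ (-γ) * ‖zext ω ℓ‖ * (znorm k.1 / znorm ℓ) := by gcongr
      _ = _ := by rw [e]; ring
  have hnn : ∀ ℓ : ℤ × ℤ, 0 ≤ (if ℓ ≠ 0 ∧ 2 * znorm k.1 < znorm ℓ ∧ k.1 - ℓ ≠ 0 then
      ‖zext ω (k.1 - ℓ)‖ * ‖zext ω ℓ‖ * (znorm k.1 / znorm ℓ) else 0) := by
    intro ℓ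
    have : 0 ≤ znorm ℓ := Real.sqrt_nonneg _
    split_ifs <;> positivity
  have hfin : ∀ F : Finset (ℤ × ℤ),
      ∑ ℓ ∈ F, (if ℓ ≠ 0 ∧ 2 * znorm k.1 < znorm ℓ ∧ k.1 - ℓ ≠ 0 then
        ‖zext ω (k.1 - ℓ)‖ * ‖zext ω ℓ‖ * (znorm k.1 / znorm ℓ) else 0) ≤
      2 ^ γ * √(8 * (2 ^ (1 + 2 * γ) / (2 * γ))) * D * S * znorm k.1 / znorm k.1 ^ γ := by
    intro F
    rw [← Finset.sum_filter]
    calc _ ≤ _ := Finset.sum_le_sum fun ℓ hℓ => hpt ℓ (Finset.mem_filter.1 hℓ).2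
      _ ≤ 2 ^ γ * D * znorm k.1 *
          (S * (√(8 * (2 ^ (1 + 2 * γ) / (2 * γ))) * znorm k.1 ^ (-γ))) := by
          rw [← Finset.mul_sum]
          gcongr
          exact sqrt_tail_bound hγ hS hsum hω hk1 _
            (fun a ha => (Finset.mem_filter.1 ha).2.1)
            (fun a ha => (Finset.mem_filter.1 ha).2.2.1)
      _ = _ := by rw [Real.rpow_neg hk0.le]; ring
  exact ⟨summable_of_sum_le hnn hfin, Real.tsum_le_of_sum_le hnn hfin⟩
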